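/- Let (A,m,k) be a Noetherian local ring of Krull dimension d whose residue field k is algebraically closed of characteristic 0, and let I be an m-primary integrally closed ideal (I = Ī). If dim_k(I/I_>) > d, then the intersection of *J over all minimal reductions J of I equals I_>. -/

import Mathlib

open Filter Polynomial

/-- An element `b` is weakly subintegral over a subset (subring) `R` of `B`:
there are `q ≥ 0` and `a_i ∈ R` (`1 ≤ i ≤ 2q+1`) with
`b^n + ∑_{i=1}^n (n choose i) a_i b^{n-i} = 0` for `q+1 ≤ n ≤ 2q+1`. -/
def WSubOver {B : Type*} [CommRing B] (R : Set B) (b : B) : Prop :=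
  ∃ q : ℕ, ∃ a : ℕ → B, (∀ i, a i ∈ R) ∧
    ∀ n, q + 1 ≤ n → n ≤ 2 * q + 1 →
      b ^ n + ∑ i ∈ Finset.Icc 1 n, (n.choose i : B) * a i * b ^ (n - i) = 0

/-- An element `b` is weakly subintegral over an ideal `I`:
there are `q ≥ 0` and `a_i ∈ I^i` with
`b^n + ∑_{i=1}^n (n choose i) a_i b^{n-i} = 0` for `q+1 ≤ n ≤ 2q+1`.
The set of such elements is the weak subintegral closure `*I`. -/
def WSubIdeal {A : Type*} [CommRing A] (I : Ideal A) (b : A) : Prop :=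
  ∃ q : ℕ, ∃ a : ℕ → A, (∀ i, a i ∈ I ^ i) ∧
    ∀ n, q + 1 ≤ n → n ≤ 2 * q + 1 →
      b ^ n + ∑ i ∈ Finset.Icc 1 n, (n.choose i : A) * a i * b ^ (n - i) = 0

/-- `a` is integral over the ideal `I`: `a^n + c_1 a^{n-1} + ⋯ + c_n = 0` with `c_i ∈ I^i`.
The set of such elements is the integral closure `Ī` of `I`. -/
def IntegralOverIdeal {A : Type*} [CommRing A] (I : Ideal A) (a : A) : Prop :=
  ∃ n : ℕ, 0 < n ∧ ∃ c : ℕ → A, (∀ i, c i ∈ I ^ i) ∧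
    a ^ n + ∑ i ∈ Finset.Icc 1 n, c i * a ^ (n - i) = 0

/-- `J` is a reduction of `I`: `J ⊆ I` and `J̄ = Ī`. -/
def IsReduction {A : Type*} [CommRing A] (J I : Ideal A) : Prop :=
  J ≤ I ∧ ∀ x, IntegralOverIdeal J x ↔ IntegralOverIdeal I x

/-- `J` is a minimal reduction of `I`. -/
def IsMinimalReduction {A : Type*} [CommRing A] (J I : Ideal A) : Prop :=
  IsReduction J I ∧ ∀ J' : Ideal A, IsReduction J' I → J' ≤ J → J' = J

/-- `ord_I(a) = max {n | a ∈ I^n}` (with value `∞` if `a ∈ ⋂ I^n`). -/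
noncomputable def ordI {A : Type*} [CommRing A] (I : Ideal A) (a : A) : ℕ∞ :=
  ⨆ (n : ℕ) (_ : a ∈ I ^ n), (n : ℕ∞)

/-- The sequence `ord_I(a^n)/n`, whose limit is the asymptotic Samuel function `v̄_I(a)`. -/
noncomputable def samuelSeq {A : Type*} [CommRing A] (I : Ideal A) (a : A) (n : ℕ) : ENNReal :=
  (ordI I (a ^ n) : ENNReal) / (n : ENNReal)

/-- `a ∈ I_>`, i.e. `v̄_I(a) > 1`, where `v̄_I(a)` is the limit of `ord_I(a^n)/n`
(this limit always exists in `[0,∞]`). -/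
def MemIgt {A : Type*} [CommRing A] (I : Ideal A) (a : A) : Prop :=
  ∃ L : ENNReal, 1 < L ∧ Filter.Tendsto (samuelSeq I a) Filter.atTop (nhds L)

/-!
If `b ∈ I_>` and `J` is a reduction of `I`, then `bⁿ ∈ Jⁿ` for all large `n`, and integer multiples
`aᵢ` of `bⁱ` show that `b` is weakly subintegral over `J`.

For the converse, let `Z` be the set of linear maps `I → k` that extend to the Rees algebra of `I`,
that is, the `k`-points of the fibre cone. By the Nullstellensatz, `b ∈ I_>` as soon as `b` vanishes
on `Z`, and the kernel of a linear map `λ ∉ Z` is a reduction of `I`.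

Let `b` be weakly subintegral over every reduction. If `λ, μ ∈ Z` and `λ - μ ∉ Z`, then `λ` and `μ`
agree on the reduction `ker (λ - μ)`, and in characteristic `0` the binomial equations of `b` over
it have only one solution, so `λ b = μ b`. If `b` did not vanish on `Z`, this would make the cone
`Z` closed under addition: points of `Z` with different values at `b` have their difference in `Z`,
and the remaining sums are limits along lines. But `Z` is no linear subspace, because its dimension
is the analytic spread of `I`, at most `d`, while `dim (I / I_>) > d` linear forms are independent
on it.
-/

section Samuel

theorem tendsto_natDiv_div_atTop {m : ℕ} (hm : m ≠ 0) :
    Tendsto (fun n : ℕ => ((n / m : ℕ) : ENNReal) / n) atTop (nhds (m : ENNReal)⁻¹) := by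
  have hreal : Tendsto (fun n : ℕ => ((⌊(m : ℝ)⁻¹ * n⌋₊ : ℕ) : ℝ) / n) atTop (nhds (m : ℝ)⁻¹) :=
    (tendsto_nat_floor_mul_div_atTop (by positivity)).comp tendsto_natCast_atTop_atTop
  have hlim := ENNReal.tendsto_ofReal hreal
  rw [ENNReal.ofReal_inv_of_pos (by positivity), ENNReal.ofReal_natCast] at hlim
  refine hlim.congr' ?_
  filter_upwards [eventually_gt_atTop 0] with n hn
  rw [ENNReal.ofReal_div_of_pos (by positivity), ENNReal.ofReal_natCast, ENNReal.ofReal_natCast,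
    inv_mul_eq_div, Nat.floor_div_natCast, Nat.floor_natCast]

theorem mul_le_of_superadditive {u : ℕ → ENNReal} (hu : ∀ m n, u m + u n ≤ u (m + n))
    (m q : ℕ) : q * u m ≤ u (q * m) := by
  induction q with
  | zero => simp
  | succ q ih =>
    calc ((q + 1 : ℕ) : ENNReal) * u m = q * u m + u m := by push_cast; ring
      _ ≤ u (q * m) + u m := by gcongr
      _ ≤ u ((q + 1) * m) := by rw [Nat.succ_mul]; exact hu _ _

-- Fekete's lemma
theorem tendsto_div_of_superadditive {u : ℕ → ENNReal} (hu : ∀ m n, u m + u n ≤ u (m + n)) :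
    Tendsto (fun n => u n / n) atTop (nhds (⨆ n : ℕ, u (n + 1) / (n + 1 : ℕ))) := by
  refine tendsto_order.2 ⟨fun c hc => ?_, fun c hc => ?_⟩
  · obtain ⟨m, hm⟩ := lt_iSup_iff.1 hc
    have hlim : Tendsto (fun n : ℕ => ((n / (m + 1) : ℕ) : ENNReal) / n * u (m + 1)) atTop
        (nhds (u (m + 1) / (m + 1 : ℕ))) := by
      rw [ENNReal.div_eq_inv_mul]
      exact ENNReal.Tendsto.mul_const (tendsto_natDiv_div_atTop m.succ_ne_zero)
        (Or.inl (ENNReal.inv_ne_zero.2 (ENNReal.natCast_ne_top _)))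
    filter_upwards [hlim.eventually_const_lt hm] with n hn
    refine hn.trans_le ?_
    rw [← ENNReal.mul_div_right_comm]
    gcongr
    calc ((n / (m + 1) : ℕ) : ENNReal) * u (m + 1)
        ≤ u (n / (m + 1) * (m + 1)) := mul_le_of_superadditive hu _ _
      _ ≤ u (n / (m + 1) * (m + 1)) + u (n % (m + 1)) := le_self_add
      _ ≤ u (n / (m + 1) * (m + 1) + n % (m + 1)) := hu _ _
      _ = u n := by rw [Nat.div_add_mod']
  · filter_upwards [eventually_gt_atTop 0] with n hn
    obtain ⟨n, rfl⟩ := Nat.exists_eq_succ_of_ne_zero hn.ne'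
    exact (le_iSup (fun n : ℕ => u (n + 1) / (n + 1 : ℕ)) n).trans_lt hc

variable {A : Type*} [CommRing A] {I : Ideal A} {x y : A} {n : ℕ}

theorem natCast_le_ordI_iff : (n : ℕ∞) ≤ ordI I x ↔ x ∈ I ^ n := by
  refine ⟨fun h => ?_, le_iSup₂ (f := fun (n : ℕ) (_ : x ∈ I ^ n) => (n : ℕ∞)) n⟩
  cases n with
  | zero => simp
  | succ n =>
    have hlt : (n : ℕ∞) < ordI I x := lt_of_lt_of_le (by exact_mod_cast n.lt_succ_self) h
    obtain ⟨l, hl⟩ := lt_iSup_iff.1 hlt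
    obtain ⟨hx, hnl⟩ := lt_iSup_iff.1 hl
    exact Ideal.pow_le_pow_right (by exact_mod_cast hnl) hx

theorem ordI_add_ordI_le_ordI_mul (I : Ideal A) (x y : A) :
    ordI I x + ordI I y ≤ ordI I (x * y) := by
  refine ENat.biSup_add_biSup_le' ⟨0, by simp⟩ ⟨0, by simp⟩ fun m hm n hn => ?_
  rw [← Nat.cast_add, natCast_le_ordI_iff, pow_add]
  exact Ideal.mul_mem_mul hm hn

theorem tendsto_samuelSeq (I : Ideal A) (x : A) :
    Tendsto (samuelSeq I x) atTop (nhds (⨆ n, samuelSeq I x (n + 1))) :=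
  tendsto_div_of_superadditive fun m n => by
    rw [pow_add]
    exact_mod_cast ordI_add_ordI_le_ordI_mul I (x ^ m) (x ^ n)

theorem memIgt_of_pow_mem (hn : 0 < n) (h : x ^ n ∈ I ^ (n + 1)) : MemIgt I x := by
  refine ⟨_, ?_, tendsto_samuelSeq I x⟩
  obtain ⟨n, rfl⟩ := Nat.exists_eq_succ_of_ne_zero hn.ne'
  refine lt_of_lt_of_le ?_ (le_iSup (fun n => samuelSeq I x (n + 1)) n)
  rw [samuelSeq, ENNReal.lt_div_iff_mul_lt (by simp) (by simp), one_mul]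
  have hord := natCast_le_ordI_iff.2 h
  have hlt : ((n + 1 : ℕ) : ℕ∞) < ordI I (x ^ (n + 1)) :=
    lt_of_lt_of_le (by exact_mod_cast Nat.lt_succ_self _) hord
  exact_mod_cast hlt

theorem MemIgt.eventually_pow_mem (h : MemIgt I x) (t : ℕ) :
    ∀ᶠ n in atTop, x ^ n ∈ I ^ (n + t) := by
  obtain ⟨L, hL, hlim⟩ := h
  have hbound : Tendsto (fun n : ℕ => 1 + (t : ENNReal) / n) atTop (nhds 1) := by
    simpa using (ENNReal.Tendsto.const_div ENNReal.tendsto_nat_nhds_top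
      (Or.inr (ENNReal.natCast_ne_top t))).const_add 1
  filter_upwards [hbound.eventually_lt hlim hL, eventually_gt_atTop 0] with n hn hn0
  have hn0' : (n : ENNReal) ≠ 0 := by exact_mod_cast hn0.ne'
  have hntop : (n : ENNReal) ≠ ⊤ := ENNReal.natCast_ne_top n
  have hle := mul_le_mul_left hn.le (n : ENNReal)
  rw [samuelSeq, ENNReal.div_mul_cancel hn0' hntop, add_mul, one_mul,
    ENNReal.div_mul_cancel hn0' hntop] at hle
  exact natCast_le_ordI_iff.1 (by exact_mod_cast hle)

end Samuel

section ReesAlgebra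

variable {A : Type*} [CommRing A]

/-- The element `y Tⁿ` of the Rees algebra of `I`, for `y ∈ Iⁿ`. -/
noncomputable def reesMonomial {I : Ideal A} {n : ℕ} {y : A} (hy : y ∈ I ^ n) : reesAlgebra I :=
  ⟨monomial n y, reesAlgebra.monomial_mem.2 hy⟩

/-- The inclusion `b ↦ b T` of `I` as the degree one part of its Rees algebra. -/
noncomputable def reesLinear (I : Ideal A) : I →ₗ[A] reesAlgebra I :=
  ((monomial 1).comp I.subtype).codRestrict (Subalgebra.toSubmodule (reesAlgebra I)) fun b =>
    reesAlgebra.monomial_mem.2 (by simp)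

@[simp]
theorem coe_reesMonomial {I : Ideal A} {n : ℕ} {y : A} (hy : y ∈ I ^ n) :
    (reesMonomial hy : A[X]) = monomial n y :=
  rfl

@[simp]
theorem coe_reesLinear {I : Ideal A} (b : I) : (reesLinear I b : A[X]) = monomial 1 (b : A) :=
  rfl

theorem reesLinear_pow {I : Ideal A} (b : I) (n : ℕ) :
    reesLinear I b ^ n = reesMonomial (Ideal.pow_mem_pow b.2 n) :=
  Subtype.ext (by simp [monomial_pow])

theorem adjoin_range_reesLinear (I : Ideal A) :
    Algebra.adjoin A (Set.range (reesLinear I)) = ⊤ := by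
  have hinj : Function.Injective (reesAlgebra I).val := Subtype.val_injective
  have himage : (reesAlgebra I).val '' Set.range (reesLinear I) =
      Submodule.map (monomial 1 : A →ₗ[A] A[X]) I := by
    rw [← Set.range_comp]
    ext p
    simp
  rw [← (Subalgebra.map_injective hinj).eq_iff, AlgHom.map_adjoin, himage,
    adjoin_monomial_eq_reesAlgebra, Algebra.map_top, Subalgebra.range_val]

theorem reesAlgebra_algHom_ext {I : Ideal A} {R : Type*} [Semiring R] [Algebra A R]
    {φ ψ : reesAlgebra I →ₐ[A] R} (h : ∀ b, φ (reesLinear I b) = ψ (reesLinear I b)) : φ = ψ :=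
  AlgHom.ext_of_adjoin_eq_top (adjoin_range_reesLinear I) (by rintro _ ⟨b, rfl⟩; exact h b)

theorem reesAlgebra_mono {I J : Ideal A} (h : J ≤ I) : reesAlgebra J ≤ reesAlgebra I :=
  fun _ hf n => Ideal.pow_right_mono h n (hf n)

/-- An `I`-filtration by ideals `Fₙ` induces the ideal `⨁ (Fₙ ∩ Iⁿ) Tⁿ` of the Rees algebra. -/
def reesFiltrationIdeal {I : Ideal A} (F : I.Filtration A) : Ideal (reesAlgebra I) where
  carrier := {f | ∀ n, (f : A[X]).coeff n ∈ F.N n}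
  zero_mem' n := by simp
  add_mem' hf hg n := by simpa using add_mem (hf n) (hg n)
  smul_mem' g f hf n := by
    rw [smul_eq_mul, MulMemClass.coe_mul, coeff_mul]
    refine sum_mem fun ij hij => ?_
    rw [← Finset.HasAntidiagonal.mem_antidiagonal.1 hij]
    exact F.pow_smul_le _ _ (Submodule.smul_mem_smul (g.2 _) (hf _))

theorem reesMonomial_mem_reesFiltrationIdeal {I : Ideal A} {F : I.Filtration A} {n : ℕ} {y : A}
    (hy : y ∈ I ^ n) : reesMonomial hy ∈ reesFiltrationIdeal F ↔ y ∈ F.N n := by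
  refine ⟨fun h => by simpa using h n, fun h e => ?_⟩
  rw [coe_reesMonomial, coeff_monomial]
  split_ifs with hne
  · exact hne ▸ h
  · exact zero_mem _

theorem algebraMap_mem_radical_reesFiltrationIdeal {I : Ideal A} {F : I.Filtration A} {a : A}
    (ha : a ∈ Ideal.radical (F.N 0)) :
    algebraMap A (reesAlgebra I) a ∈ (reesFiltrationIdeal F).radical := by
  obtain ⟨n, hn⟩ := ha
  refine ⟨n, ?_⟩
  rw [← map_pow]
  exact (reesMonomial_mem_reesFiltrationIdeal (by simp)).2 hn

theorem reesMonomial_mem_span_reesLinear_pow {I : Ideal A} {n : ℕ} {y : A} (hy : y ∈ I ^ n) :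
    reesMonomial hy ∈ Ideal.span (Set.range (reesLinear I)) ^ n := by
  induction hy using Submodule.pow_induction_on_left' with
  | algebraMap r => simp
  | add y z n hy hz ihy ihz =>
    convert add_mem ihy ihz
    exact Subtype.ext (by simp)
  | mem_mul b hb n y hy ih =>
    have hbT : reesLinear I ⟨b, hb⟩ ∈ Ideal.span (Set.range (reesLinear I)) :=
      Ideal.subset_span (Set.mem_range_self _)
    have hmul := Ideal.mul_mem_mul hbT ih
    rw [← pow_succ'] at hmul
    convert hmul
    exact Subtype.ext (by simp [monomial_mul_monomial, add_comm])

theorem exists_forall_pow_le_of_reesLinear_mem_radical [IsNoetherianRing A] {I : Ideal A}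
    (F : I.Filtration A) (h : ∀ b, reesLinear I b ∈ (reesFiltrationIdeal F).radical) :
    ∃ s, ∀ n, s ≤ n → I ^ n ≤ F.N n := by
  have hspan : Ideal.span (Set.range (reesLinear I)) ≤ (reesFiltrationIdeal F).radical := by
    rw [Ideal.span_le]
    rintro _ ⟨b, rfl⟩
    exact h b
  obtain ⟨s, hs⟩ := Ideal.exists_pow_le_of_le_radical_of_fg hspan (IsNoetherian.noetherian _)
  exact ⟨s, fun n hn y hy => (reesMonomial_mem_reesFiltrationIdeal hy).1
    (hs (Ideal.pow_le_pow_right hn (reesMonomial_mem_span_reesLinear_pow hy)))⟩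

/-- The `I`-filtration `J, J, J I, J I², …`: for `J ⊆ I` it contains a tail of the
`I`-adic filtration precisely when `I` is integral over `J`. -/
def reductionFiltration (I J : Ideal A) : I.Filtration A where
  N n := J * I ^ (n - 1)
  mono n := Ideal.mul_mono_right (Ideal.pow_le_pow_right (by omega))
  smul_le n := by
    rw [smul_eq_mul, mul_left_comm, ← pow_succ']
    exact Ideal.mul_mono_right (Ideal.pow_le_pow_right (by omega))

end ReesAlgebra

section Reductions

variable {A : Type*} [CommRing A] {I J : Ideal A} {x : A}

theorem IntegralOverIdeal.mono (h : J ≤ I) (hx : IntegralOverIdeal J x) :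
    IntegralOverIdeal I x := by
  obtain ⟨n, hn, c, hc, he⟩ := hx
  exact ⟨n, hn, c, fun i => Ideal.pow_right_mono h i (hc i), he⟩

theorem IntegralOverIdeal.of_mem (hx : x ∈ I) : IntegralOverIdeal I x := by
  refine ⟨1, one_pos, fun i => if i = 1 then -x else 0, fun i => ?_, by simp⟩
  dsimp only
  split_ifs with h
  · simpa [h] using hx
  · exact zero_mem _

theorem IntegralOverIdeal.exists_pow_mem_mul (hJI : J ≤ I) (hxI : x ∈ I)
    (hx : IntegralOverIdeal J x) : ∃ n, x ^ n ∈ J * I ^ (n - 1) := by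
  obtain ⟨n, -, c, hc, he⟩ := hx
  refine ⟨n, ?_⟩
  rw [eq_neg_of_add_eq_zero_left he]
  refine neg_mem (sum_mem fun i hi => ?_)
  obtain ⟨hi1, hin⟩ := Finset.mem_Icc.1 hi
  obtain ⟨i, rfl⟩ := Nat.exists_eq_add_of_le' hi1
  have hle : J ^ (i + 1) * I ^ (n - (i + 1)) ≤ J * I ^ (n - 1) := by
    rw [pow_succ', mul_assoc, show n - 1 = i + (n - (i + 1)) by omega, pow_add]
    exact Ideal.mul_mono_right (Ideal.mul_mono_left (Ideal.pow_right_mono hJI i))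
  exact hle (Ideal.mul_mem_mul (hc _) (Ideal.pow_mem_pow hxI _))

theorem WSubIdeal.mono (h : J ≤ I) (hx : WSubIdeal J x) : WSubIdeal I x := by
  obtain ⟨q, c, hc, he⟩ := hx
  exact ⟨q, c, fun i => Ideal.pow_right_mono h i (hc i), he⟩

theorem WSubIdeal.integralOverIdeal (hx : WSubIdeal J x) : IntegralOverIdeal J x := by
  obtain ⟨q, c, hc, he⟩ := hx
  exact ⟨q + 1, q.succ_pos, fun i => ((q + 1).choose i : A) * c i,
    fun i => Ideal.mul_mem_left _ _ (hc i), he (q + 1) le_rfl (by omega)⟩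

theorem integralOverIdeal_of_monic {p : A[X]} (hp : p.Monic) (hpos : 0 < p.natDegree)
    (hc : ∀ i, p.coeff i ∈ J ^ (p.natDegree - i)) (he : p.eval x = 0) :
    IntegralOverIdeal J x := by
  set n := p.natDegree with hn
  refine ⟨n, hpos, fun i => if i ≤ n then p.coeff (n - i) else 0, fun i => ?_, ?_⟩
  · dsimp only
    split_ifs with hi
    · simpa [Nat.sub_sub_self hi] using hc (n - i)
    · exact zero_mem _
  · refine Eq.trans ?_ he
    rw [eval_eq_sum_range, ← hn, ← Finset.sum_range_reflect, Finset.range_eq_Ico,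
      Finset.sum_eq_sum_Ico_succ_bot n.succ_pos]
    refine congrArg₂ (· + ·) (by simp [hn, hp.coeff_natDegree])
      (Finset.sum_congr rfl fun i hi => ?_)
    simp [Nat.lt_succ_iff.1 (Finset.mem_Ico.1 hi).2]

theorem exists_monic_eval_mul_eq_zero {M : Ideal A} (hM : M.FG)
    (h : ∀ y ∈ M, x * y ∈ J * M) :
    ∃ p : A[X], p.Monic ∧ (∀ i, p.coeff i ∈ J ^ (p.natDegree - i)) ∧
      ∀ y ∈ M, p.eval x * y = 0 := by
  have : Module.Finite A M := Module.Finite.iff_fg.2 hM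
  have hrange : LinearMap.range (algebraMap A (Module.End A M) x) ≤ J • ⊤ := by
    rintro _ ⟨y, rfl⟩
    exact (Submodule.mem_smul_top_iff J M _).2 (h y y.2)
  obtain ⟨p, hp, -, hc, he⟩ :=
    LinearMap.exists_monic_and_natDegree_eq_and_coeff_mem_pow_and_aeval_eq_zero A
      (algebraMap A (Module.End A M) x) J hrange
  refine ⟨p, hp, hc, fun y hy => ?_⟩
  rw [aeval_algebraMap_apply] at he
  simpa [coe_aeval_eq_eval] using congrArg Subtype.val (LinearMap.congr_fun he ⟨y, hy⟩)

theorem integralOverIdeal_of_pow_le (hI : I.FG) {s : ℕ} (h : I ^ (s + 1) ≤ J * I ^ s)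
    (hx : x ∈ I) : IntegralOverIdeal J x := by
  obtain ⟨p, hp, hc, he⟩ := exists_monic_eval_mul_eq_zero (J := J) (hI.pow (n := s))
    fun y hy => h (by rw [pow_succ']; exact Ideal.mul_mem_mul hx hy)
  rcases subsingleton_or_nontrivial A with _ | _
  · exact .of_mem (Subsingleton.elim 0 x ▸ zero_mem J)
  have hdeg : (X ^ (s + 1) * p).natDegree = s + 1 + p.natDegree := by
    rw [(monic_X_pow _).natDegree_mul hp, natDegree_X_pow]
  refine integralOverIdeal_of_monic (p := X ^ (s + 1) * p) ((monic_X_pow _).mul hp) (by omega)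
    (fun i => ?_) ?_
  · rw [hdeg, coeff_X_pow_mul']
    split_ifs with hi
    · rw [show s + 1 + p.natDegree - i = p.natDegree - (i - (s + 1)) by omega]
      exact hc _
    · exact zero_mem _
  · calc (X ^ (s + 1) * p).eval x = x * (p.eval x * x ^ s) := by
          simp only [eval_mul, eval_pow, eval_X]; ring
      _ = 0 := by rw [he _ (Ideal.pow_mem_pow hx s), mul_zero]

theorem isReduction_of_pow_le (hI : I.FG) (hIcl : ∀ y, IntegralOverIdeal I y → y ∈ I)
    (hJI : J ≤ I) {s : ℕ} (h : I ^ (s + 1) ≤ J * I ^ s) : IsReduction J I :=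
  ⟨hJI, fun y => ⟨.mono hJI, fun hy => integralOverIdeal_of_pow_le hI h (hIcl y hy)⟩⟩

theorem IsReduction.exists_pow_le [IsNoetherianRing A] (h : IsReduction J I) :
    ∃ s, I ^ (s + 1) ≤ J * I ^ s := by
  obtain ⟨s, hs⟩ := exists_forall_pow_le_of_reesLinear_mem_radical (reductionFiltration I J)
    fun b => by
      obtain ⟨n, hn⟩ := ((h.2 b).2 (.of_mem b.2)).exists_pow_mem_mul h.1 b.2
      refine ⟨n, ?_⟩
      rw [reesLinear_pow]
      exact (reesMonomial_mem_reesFiltrationIdeal _).2 hn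
  exact ⟨s, hs (s + 1) s.le_succ⟩

theorem pow_add_le_of_pow_succ_le {s : ℕ} (h : I ^ (s + 1) ≤ J * I ^ s) (n : ℕ) :
    I ^ (n + s) ≤ J ^ n * I ^ s := by
  induction n with
  | zero => simp
  | succ n ih =>
    calc I ^ (n + 1 + s) = I ^ (n + s) * I := by rw [← pow_succ]; congr 1; omega
      _ ≤ J ^ n * I ^ s * I := Ideal.mul_mono_left ih
      _ = J ^ n * I ^ (s + 1) := by rw [mul_assoc, ← pow_succ]
      _ ≤ J ^ n * (J * I ^ s) := Ideal.mul_mono_right h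
      _ = J ^ (n + 1) * I ^ s := by rw [pow_succ, mul_assoc]

/-- The integers `rᵢ` with `rᵢ = 0` for `i ≤ q` and `1 + ∑_{i=1}^n (n choose i) rᵢ = 0` for
`n > q`, defined by solving these triangular equations. With `aᵢ = rᵢ bⁱ` an element `b` satisfies
the equations of weak subintegrality. -/
def binomialCoefficients (q : ℕ) : ℕ → ℤ
  | n => if n ≤ q then 0 else -1 - ∑ i : Fin n, (n.choose i : ℤ) * binomialCoefficients q i

theorem binomialCoefficients_of_le {q n : ℕ} (h : n ≤ q) : binomialCoefficients q n = 0 := by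
  rw [binomialCoefficients, if_pos h]

theorem sum_choose_mul_binomialCoefficients {q n : ℕ} (h : q < n) :
    ∑ i ∈ Finset.Icc 1 n, (n.choose i : ℤ) * binomialCoefficients q i = -1 := by
  have hzero : ∑ i ∈ Finset.Icc 1 n, (n.choose i : ℤ) * binomialCoefficients q i =
      ∑ i ∈ Finset.range (n + 1), (n.choose i : ℤ) * binomialCoefficients q i := by
    rw [Finset.range_eq_Ico, Finset.sum_eq_sum_Ico_succ_bot n.succ_pos,
      binomialCoefficients_of_le q.zero_le, mul_zero, zero_add]
    rfl
  rw [hzero, Finset.sum_range_succ, Nat.choose_self, binomialCoefficients.eq_1 q n,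
    if_neg h.not_ge, Fin.sum_univ_eq_sum_range fun i => (n.choose i : ℤ) * binomialCoefficients q i]
  push_cast
  ring

theorem wSubIdeal_of_forall_pow_mem {q : ℕ} (h : ∀ n, q < n → x ^ n ∈ J ^ n) :
    WSubIdeal J x := by
  refine ⟨q, fun i => (binomialCoefficients q i : A) * x ^ i, fun i => ?_, fun n hn _ => ?_⟩
  · rcases le_or_gt i q with hi | hi
    · simp [binomialCoefficients_of_le hi]
    · exact Ideal.mul_mem_left _ _ (h i hi)
  · have hterm : ∀ i ∈ Finset.Icc 1 n,
        (n.choose i : A) * ((binomialCoefficients q i : A) * x ^ i) * x ^ (n - i) =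
          ((n.choose i : ℤ) * binomialCoefficients q i : ℤ) * x ^ n := fun i hi => by
      rw [← pow_mul_pow_sub x (Finset.mem_Icc.1 hi).2]
      push_cast
      ring
    rw [Finset.sum_congr rfl hterm, ← Finset.sum_mul, ← Int.cast_sum,
      sum_choose_mul_binomialCoefficients hn]
    simp

theorem MemIgt.wSubIdeal [IsNoetherianRing A] (hJ : IsReduction J I) (hx : MemIgt I x) :
    WSubIdeal J x := by
  obtain ⟨s, hs⟩ := hJ.exists_pow_le
  obtain ⟨q, hq⟩ := eventually_atTop.1 (hx.eventually_pow_mem s)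
  exact wSubIdeal_of_forall_pow_mem fun n hn =>
    Ideal.mul_le_left (pow_add_le_of_pow_succ_le hs n (hq n hn.le))

end Reductions

section MinimalReductions

open IsLocalRing

theorem exists_le_map_eq_and_spanFinrank_le {R M N : Type*} [Ring R] [AddCommGroup M] [Module R M]
    [AddCommGroup N] [Module R N] (f : M →ₗ[R] N) {P : Submodule R M} (hP : (P.map f).FG) :
    ∃ P' ≤ P, P'.map f = P.map f ∧ P'.spanFinrank ≤ (P.map f).spanFinrank := by
  obtain ⟨s, hcard, hs⟩ := hP.exists_span_finset_card_eq_spanFinrank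
  have hsP : (s : Set N) ⊆ f '' P := by
    rw [← Submodule.map_coe, ← hs]
    exact Submodule.subset_span
  obtain ⟨t, htP, hbij⟩ := Set.SurjOn.exists_bijOn_subset hsP
  have htfin : t.Finite := hbij.finite_iff_finite.2 s.finite_toSet
  refine ⟨Submodule.span R t, Submodule.span_le.2 htP, ?_, ?_⟩
  · rw [Submodule.map_span, hbij.image_eq, hs]
  · calc (Submodule.span R t).spanFinrank
        ≤ t.ncard := Submodule.spanFinrank_span_le_ncard_of_finite htfin
      _ = s.card := by rw [← hbij.injOn.ncard_image, hbij.image_eq, Set.ncard_coe_finset]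
      _ = (P.map f).spanFinrank := hcard

theorem spanFinrank_lt_finrank {A k V : Type*} [CommRing A] [Field k] [Algebra A k]
    [AddCommGroup V] [Module A V] [Module k V] [IsScalarTower A k V] [Module.Finite k V]
    (hk : Function.Surjective (algebraMap A k)) {N : Submodule A V} (hN : N ≠ ⊤) :
    N.spanFinrank < Module.finrank k V := by
  have hspan : (Submodule.span k (N : Set V)).restrictScalars A = N := by
    rw [Submodule.restrictScalars_span A k hk, Submodule.span_eq]
  have hne : Submodule.span k (N : Set V) ≠ ⊤ := fun h => hN (by rw [← hspan, h]; rfl)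
  rw [← hspan, Submodule.spanFinrank, Submodule.spanRank_restrictScalars_eq hk,
    ← Submodule.spanFinrank, ← Submodule.spanFinrank_top, ← Module.finrank_eq_spanFinrank_of_free]
  exact Submodule.finrank_lt hne

theorem exists_spanFinrank_lt {A M : Type*} [CommRing A] [IsNoetherianRing A]
    [IsLocalRing A] [AddCommGroup M] [Module A M] {J K : Submodule A M} (hJ : J.FG) (hKJ : K < J) :
    ∃ K' ≤ K, K'.spanFinrank < J.spanFinrank ∧ K ≤ K' ⊔ maximalIdeal A • J := by
  let mJ : Submodule A J := maximalIdeal A • ⊤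
  have hmap_mJ : mJ.map J.subtype = maximalIdeal A • J := by
    rw [Submodule.map_smul'', Submodule.map_top, Submodule.range_subtype]
  let P : Submodule A J := K.comap J.subtype
  have hmap_P : P.map J.subtype = K := by
    rw [Submodule.map_comap_subtype, inf_eq_right.2 hKJ.le]
  have : Module.Finite A J := Module.Finite.iff_fg.2 hJ
  have : Module.Finite (A ⧸ maximalIdeal A) (J ⧸ mJ) :=
    Module.Finite.of_restrictScalars_finite A _ _
  have hP_ne_top : P.map mJ.mkQ ≠ ⊤ := fun h => by
    refine hKJ.not_ge (Submodule.le_of_le_smul_of_le_jacobson_bot hJ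
      (maximalIdeal_le_jacobson _) ?_)
    have htop : P ⊔ mJ = ⊤ := by simpa [Submodule.map_mkQ_eq_top, sup_comm] using h
    rw [← hmap_mJ, ← hmap_P, ← Submodule.map_sup, htop, Submodule.map_top,
      Submodule.range_subtype]
  obtain ⟨P', hP', hmap, hrank⟩ := exists_le_map_eq_and_spanFinrank_le mJ.mkQ
    (IsNoetherian.noetherian (P.map mJ.mkQ))
  refine ⟨P'.map J.subtype, hmap_P ▸ Submodule.map_mono hP', ?_, ?_⟩
  · rw [Submodule.spanFinrank_map_eq_of_injective _ J.injective_subtype,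
      spanFinrank_eq_finrank_quotient J hJ]
    let : Field (A ⧸ maximalIdeal A) := Ideal.Quotient.field _
    exact hrank.trans_lt (spanFinrank_lt_finrank Ideal.Quotient.mk_surjective hP_ne_top)
  · have hP_le : P ≤ P' ⊔ mJ := by
      rw [← Submodule.ker_mkQ mJ, ← Submodule.comap_map_eq, hmap]
      exact Submodule.le_comap_map _ _
    calc K = P.map J.subtype := hmap_P.symm
      _ ≤ (P' ⊔ mJ).map J.subtype := Submodule.map_mono hP_le
      _ = P'.map J.subtype ⊔ maximalIdeal A • J := by rw [Submodule.map_sup, hmap_mJ]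

variable {A : Type*} [CommRing A] [IsNoetherianRing A] [IsLocalRing A] {I J K : Ideal A}

theorem IsReduction.of_le_sup (hIcl : ∀ x, IntegralOverIdeal I x → x ∈ I) (hJ : IsReduction J I)
    (hK : K ≤ I) (hJK : J ≤ K ⊔ maximalIdeal A * I) : IsReduction K I := by
  obtain ⟨s, hs⟩ := hJ.exists_pow_le
  refine isReduction_of_pow_le (IsNoetherian.noetherian I) hIcl hK (s := s) ?_
  refine Submodule.le_of_le_smul_of_le_jacobson_bot (IsNoetherian.noetherian _)
    (maximalIdeal_le_jacobson _) ?_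
  calc I ^ (s + 1) ≤ J * I ^ s := hs
    _ ≤ (K ⊔ maximalIdeal A * I) * I ^ s := Ideal.mul_mono_left hJK
    _ = K * I ^ s ⊔ maximalIdeal A • I ^ (s + 1) := by
      rw [Ideal.sup_mul, smul_eq_mul, pow_succ', mul_assoc]

-- A reduction with the fewest generators among those contained in `J` is minimal.
theorem IsReduction.exists_isMinimalReduction_le (hIcl : ∀ x, IntegralOverIdeal I x → x ∈ I)
    (hJ : IsReduction J I) : ∃ J' ≤ J, IsMinimalReduction J' I := by
  obtain ⟨J', ⟨hJ'J, hJ'⟩, hmin⟩ := (measure (Submodule.spanFinrank : Ideal A → ℕ)).wf.has_min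
    {J' : Ideal A | J' ≤ J ∧ IsReduction J' I} ⟨J, le_rfl, hJ⟩
  refine ⟨J', hJ'J, hJ', fun K hK hKJ' => by_contra fun hne => ?_⟩
  obtain ⟨K', hK'K, hlt, hle⟩ :=
    exists_spanFinrank_lt (IsNoetherian.noetherian J') (lt_of_le_of_ne hKJ' hne)
  have hK' : IsReduction K' I := hK.of_le_sup hIcl (hK'K.trans hK.1)
    (hle.trans (sup_le_sup_left (Ideal.mul_mono_right hJ'.1) _))
  exact hmin K' ⟨hK'K.trans (hKJ'.trans hJ'J), hK'⟩ hlt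

end MinimalReductions

section Appell

variable {R : Type*} [CommRing R]

/-- The polynomial `∑_{i=0}^n (n choose i) sᵢ Tⁿ⁻ⁱ`; as `n` varies these form an Appell sequence,
that is, `appellPoly s (n + 1)` has derivative `(n + 1) * appellPoly s n`. -/
noncomputable def appellPoly (s : ℕ → R) (n : ℕ) : R[X] :=
  ∑ i ∈ Finset.range (n + 1), monomial (n - i) ((n.choose i : R) * s i)

theorem coeff_appellPoly (s : ℕ → R) (n j : ℕ) :
    (appellPoly s n).coeff j = (n.choose j : R) * s (n - j) := by
  rw [appellPoly, finsetSum_coeff]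
  by_cases hj : j ≤ n
  · rw [Finset.sum_eq_single_of_mem (n - j) (Finset.mem_range.2 (by omega))]
    · rw [coeff_monomial, if_pos (by omega), Nat.choose_symm hj]
    · intro i hi hne
      rw [Finset.mem_range] at hi
      rw [coeff_monomial, if_neg (by omega)]
  · rw [Nat.choose_eq_zero_of_lt (by omega), Nat.cast_zero, zero_mul]
    refine Finset.sum_eq_zero fun i _ => ?_
    rw [coeff_monomial, if_neg (by omega)]

theorem natDegree_appellPoly_le (s : ℕ → R) (n : ℕ) : (appellPoly s n).natDegree ≤ n := by
  refine natDegree_le_iff_coeff_eq_zero.2 fun j hj => ?_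
  rw [coeff_appellPoly, Nat.choose_eq_zero_of_lt hj, Nat.cast_zero, zero_mul]

theorem derivative_appellPoly_succ (s : ℕ → R) (n : ℕ) :
    derivative (appellPoly s (n + 1)) = C ((n + 1 : ℕ) : R) * appellPoly s n := by
  ext j
  rw [coeff_derivative, coeff_appellPoly, coeff_C_mul, coeff_appellPoly, Nat.add_sub_add_right]
  have hchoose := congrArg (Nat.cast : ℕ → R) (Nat.add_one_mul_choose_eq n j)
  push_cast at hchoose ⊢
  linear_combination -(s (n - j)) * hchoose

theorem isRoot_iterate_derivative_appellPoly (s : ℕ → R) {t : R} {n m : ℕ}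
    (h : (appellPoly s n).IsRoot t) : (derivative^[m] (appellPoly s (n + m))).IsRoot t := by
  induction m with
  | zero => simpa using h
  | succ m ih =>
    rw [Function.iterate_succ_apply, ← add_assoc, derivative_appellPoly_succ,
      iterate_derivative_C_mul]
    exact root_mul_left_of_isRoot _ ih

theorem eval_appellPoly (s : ℕ → R) (n : ℕ) (t : R) :
    (appellPoly s n).eval t =
      s 0 * t ^ n + ∑ i ∈ Finset.Icc 1 n, (n.choose i : R) * s i * t ^ (n - i) := by
  rw [appellPoly, eval_finsetSum, Finset.range_eq_Ico,
    Finset.sum_eq_sum_Ico_succ_bot n.succ_pos]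
  simp only [eval_monomial, Nat.choose_zero_right, Nat.cast_one, one_mul, Nat.sub_zero]
  rfl

variable [IsDomain R] [CharZero R]

theorem pow_dvd_appellPoly {s : ℕ → R} (hs : s 0 = 1) {q : ℕ} {t : R}
    (h : ∀ n, q + 1 ≤ n → n ≤ 2 * q + 1 → (appellPoly s n).IsRoot t) :
    (X - C t) ^ (q + 1) ∣ appellPoly s (2 * q + 1) := by
  have hne : appellPoly s (2 * q + 1) ≠ 0 := fun h0 => by
    simpa [h0, hs] using coeff_appellPoly s (2 * q + 1) (2 * q + 1)
  refine (le_rootMultiplicity_iff hne).1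
    (lt_rootMultiplicity_of_isRoot_iterate_derivative hne fun m hm => ?_)
  have hroot := isRoot_iterate_derivative_appellPoly s (m := m)
    (h (2 * q + 1 - m) (by omega) (by omega))
  rwa [Nat.sub_add_cancel (by omega)] at hroot

end Appell

-- Each solution is a root of multiplicity `> q` of a polynomial of degree `2q + 1`.
theorem eq_of_binomial_equations {k : Type*} [Field k] [CharZero k] {s : ℕ → k} {q : ℕ} {u v : k}
    (hu : ∀ n, q + 1 ≤ n → n ≤ 2 * q + 1 →
      u ^ n + ∑ i ∈ Finset.Icc 1 n, (n.choose i : k) * s i * u ^ (n - i) = 0)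
    (hv : ∀ n, q + 1 ≤ n → n ≤ 2 * q + 1 →
      v ^ n + ∑ i ∈ Finset.Icc 1 n, (n.choose i : k) * s i * v ^ (n - i) = 0) : u = v := by
  let s' : ℕ → k := Function.update s 0 1
  have hs' : s' 0 = 1 := Function.update_self ..
  have heval : ∀ n t, (appellPoly s' n).eval t =
      t ^ n + ∑ i ∈ Finset.Icc 1 n, (n.choose i : k) * s i * t ^ (n - i) := fun n t => by
    rw [eval_appellPoly, hs', one_mul]
    refine congrArg _ (Finset.sum_congr rfl fun i hi => ?_)
    have hi0 : i ≠ 0 := Nat.one_le_iff_ne_zero.1 (Finset.mem_Icc.1 hi).1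
    rw [show s' i = s i from Function.update_of_ne hi0 ..]
  have hu' := pow_dvd_appellPoly hs' fun n h₁ h₂ => (heval n u).trans (hu n h₁ h₂)
  have hv' := pow_dvd_appellPoly hs' fun n h₁ h₂ => (heval n v).trans (hv n h₁ h₂)
  by_contra hne
  have hcop : IsCoprime ((X - C u) ^ (q + 1)) ((X - C v) ^ (q + 1)) :=
    (isCoprime_X_sub_C_of_isUnit_sub (sub_ne_zero.2 hne).isUnit).pow
  have hF : appellPoly s' (2 * q + 1) ≠ 0 := fun h0 => by
    simpa [h0, hs'] using coeff_appellPoly s' (2 * q + 1) (2 * q + 1)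
  have hdeg := (natDegree_le_of_dvd (hcop.mul_dvd hu' hv') hF).trans (natDegree_appellPoly_le _ _)
  rw [((monic_X_sub_C u).pow _).natDegree_mul ((monic_X_sub_C v).pow _),
    (monic_X_sub_C u).natDegree_pow, (monic_X_sub_C v).natDegree_pow, natDegree_X_sub_C,
    natDegree_X_sub_C] at hdeg
  omega

section Nullstellensatz

variable {k : Type*} [Field k] [IsAlgClosed k]

theorem isNilpotent_of_forall_algHom {B : Type*} [CommRing B] [Algebra k B]
    [Algebra.FiniteType k B] {h : B} (hh : ∀ φ : B →ₐ[k] k, φ h = 0) : IsNilpotent h := by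
  have : IsJacobsonRing B := isJacobsonRing_of_finiteType (A := k)
  rw [← mem_nilradical, nilradical, Ideal.radical_eq_jacobson, Ideal.jacobson, Ideal.mem_sInf]
  rintro M ⟨-, hM⟩
  let : Field (B ⧸ M) := Ideal.Quotient.field M
  have : Module.Finite k (B ⧸ M) := finite_of_finite_type_of_isJacobsonRing k (B ⧸ M)
  let ι : B ⧸ M →ₐ[k] k := IsAlgClosed.lift
  have hι : ι (Ideal.Quotient.mk M h) = 0 := hh (ι.comp (Ideal.Quotient.mkₐ k M))
  exact Ideal.Quotient.eq_zero_iff_mem.1 ((map_eq_zero ι).1 hι)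

variable {A : Type*} [CommRing A] [Algebra A k]

theorem mem_radical_of_forall_algHom (hk : Function.Surjective (algebraMap A k))
    {B : Type*} [CommRing B] [Algebra A B] [Algebra.FiniteType A B] {𝔞 : Ideal B} {h : B}
    (h𝔞 : ∀ a, algebraMap A k a = 0 → algebraMap A B a ∈ 𝔞.radical)
    (hh : ∀ φ : B →ₐ[A] k, (∀ f ∈ 𝔞, φ f = 0) → φ h = 0) : h ∈ 𝔞.radical := by
  have hker : RingHom.ker (algebraMap A k) ≤ RingHom.ker (algebraMap A (B ⧸ 𝔞.radical)) :=
    fun a ha => Ideal.Quotient.eq_zero_iff_mem.2 (h𝔞 a ha)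
  let := ((algebraMap A k).liftOfSurjective hk ⟨_, hker⟩).toAlgebra
  have : IsScalarTower A k (B ⧸ 𝔞.radical) :=
    .of_algebraMap_eq' (RingHom.liftOfSurjective_comp _ hk ⟨_, hker⟩).symm
  have : Algebra.FiniteType k (B ⧸ 𝔞.radical) := .of_restrictScalars_finiteType A k _
  have hnil : IsNilpotent (Ideal.Quotient.mk 𝔞.radical h) :=
    isNilpotent_of_forall_algHom (k := k) fun φ =>
      hh ((φ.restrictScalars A).comp (Ideal.Quotient.mkₐ A 𝔞.radical)) fun f hf => by
        have hf0 : Ideal.Quotient.mk 𝔞.radical f = 0 :=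
          Ideal.Quotient.eq_zero_iff_mem.2 (Ideal.le_radical hf)
        simp [hf0]
  obtain ⟨n, hn⟩ := hnil
  rw [← map_pow, Ideal.Quotient.eq_zero_iff_mem] at hn
  exact 𝔞.radical_isRadical ⟨n, hn⟩

end Nullstellensatz

section FiberCone

variable {A : Type*} [CommRing A] {I J : Ideal A} {k : Type*}

section CommRing

variable [CommRing k] [Algebra A k]

/-- The `k`-points of the affine cone over the special fibre of the blowup of `I`, without
choosing generators of `I`: the linear maps `I → k` that extend to `A`-algebra homomorphisms from
the Rees algebra of `I`. -/
def fiberCone (I : Ideal A) (k : Type*) [CommRing k] [Algebra A k] : Set (I →ₗ[A] k) :=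
  Set.range fun φ : reesAlgebra I →ₐ[A] k => φ.toLinearMap ∘ₗ reesLinear I

theorem smul_mem_fiberCone (a : A) {u : I →ₗ[A] k} (hu : u ∈ fiberCone I k) :
    a • u ∈ fiberCone I k := by
  obtain ⟨φ, rfl⟩ := hu
  let θ : reesAlgebra I →ₐ[A] reesAlgebra I :=
    ((aeval (C a * X)).comp (reesAlgebra I).val).codRestrict (reesAlgebra I) fun f n => by
      have hcoeff : (aeval (C a * X) (f : A[X])).coeff n = (f : A[X]).coeff n * a ^ n :=
        comp_C_mul_X_coeff
      exact hcoeff ▸ Ideal.mul_mem_right _ _ (f.2 n)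
  have hθ : ∀ b, θ (reesLinear I b) = a • reesLinear I b := fun b => Subtype.ext <| by
    change aeval (C a * X) (monomial 1 (b : A)) = a • monomial 1 (b : A)
    simp [← C_mul_X_pow_eq_monomial, smul_eq_C_mul, mul_left_comm]
  exact ⟨φ.comp θ, LinearMap.ext fun b => by simp [hθ]⟩

-- The homomorphisms over the points of a line glue to one with values in `k[X]`.
theorem smul_add_mem_fiberCone [IsDomain k] {u v : I →ₗ[A] k} {S : Set k} (hS : S.Infinite)
    (h : ∀ t ∈ S, t • u + v ∈ fiberCone I k) (t : k) : t • u + v ∈ fiberCone I k := by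
  choose φ hφ using fun t : S => h t t.2
  let Φ : reesAlgebra I →ₐ[A] S → k := AlgHom.pi φ
  let E : k[X] →ₐ[A] S → k := AlgHom.pi fun t => (aeval (t : k)).restrictScalars A
  have hE : Function.Injective E := fun f g hfg =>
    eq_of_infinite_eval_eq f g (hS.mono fun t ht => by
      simpa [E, coe_aeval_eq_eval] using congrFun hfg ⟨t, ht⟩)
  have hEΦ : ∀ b, E (X * C (u b) + C (v b)) = Φ (reesLinear I b) := fun b => funext fun t => by
    simpa [E, Φ, mul_comm (u b)] using (LinearMap.congr_fun (hφ t) b).symm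
  have hrange : ∀ f, Φ f ∈ E.range := fun f => by
    have hle : Algebra.adjoin A (Set.range (reesLinear I)) ≤ E.range.comap Φ := by
      refine Algebra.adjoin_le ?_
      rintro _ ⟨b, rfl⟩
      exact ⟨_, hEΦ b⟩
    exact hle (adjoin_range_reesLinear I ▸ Algebra.mem_top)
  let ψ : reesAlgebra I →ₐ[A] k[X] :=
    (AlgEquiv.ofInjective E hE).symm.toAlgHom.comp (Φ.codRestrict E.range hrange)
  have hψ : ∀ b, ψ (reesLinear I b) = X * C (u b) + C (v b) := fun b =>
    (AlgEquiv.ofInjective E hE).symm_apply_eq.2 (Subtype.ext (hEΦ b).symm)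
  exact ⟨((aeval t).restrictScalars A).comp ψ, LinearMap.ext fun b => by simp [hψ, mul_comm (u b)]⟩

end CommRing

variable [Field k] [Algebra A k]

theorem WSubIdeal.apply_eq_of_mem_fiberCone [CharZero k] {u v : I →ₗ[A] k}
    (hu : u ∈ fiberCone I k) (hv : v ∈ fiberCone I k) (hJI : J ≤ I)
    (huv : ∀ x : I, (x : A) ∈ J → u x = v x) {b : I} (hb : WSubIdeal J (b : A)) : u b = v b := by
  obtain ⟨φ, rfl⟩ := hu
  obtain ⟨ψ, rfl⟩ := hv
  obtain ⟨q, c, hc, he⟩ := hb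
  let ι : reesAlgebra J →ₐ[A] reesAlgebra I := Subalgebra.inclusion (reesAlgebra_mono hJI)
  have hι : φ.comp ι = ψ.comp ι := reesAlgebra_algHom_ext fun x => huv ⟨x, hJI x.2⟩ x.2
  have heq : ∀ n, q + 1 ≤ n → n ≤ 2 * q + 1 → reesLinear I b ^ n +
      ∑ i ∈ Finset.Icc 1 n, (n.choose i : reesAlgebra I) * ι (reesMonomial (hc i)) *
        reesLinear I b ^ (n - i) = 0 := fun n h₁ h₂ => Subtype.ext <| by
    refine Eq.trans ?_ ((congrArg (monomial n) (he n h₁ h₂)).trans (map_zero _))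
    rw [map_add, map_sum]
    push_cast
    refine congrArg₂ (· + ·) (by simp [monomial_pow]) (Finset.sum_congr rfl fun i hi => ?_)
    rw [show ((ι (reesMonomial (hc i)) : reesAlgebra I) : A[X]) = monomial i (c i) from rfl,
      coe_reesLinear, monomial_pow, one_mul, ← C_eq_natCast, C_mul_monomial, monomial_mul_monomial,
      Nat.add_sub_cancel' (Finset.mem_Icc.1 hi).2]
  refine eq_of_binomial_equations (s := fun i => φ (ι (reesMonomial (hc i)))) (q := q)
    (fun n h₁ h₂ => ?_) fun n h₁ h₂ => ?_
  · simpa using congrArg φ (heq n h₁ h₂)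
  · have hψ : ∀ i, φ (ι (reesMonomial (hc i))) = ψ (ι (reesMonomial (hc i))) := fun i =>
      AlgHom.congr_fun hι _
    simpa [hψ] using congrArg ψ (heq n h₁ h₂)

theorem exists_eq_smul_of_ker_le (hk : Function.Surjective (algebraMap A k)) {M : Type*}
    [AddCommGroup M] [Module A M] {u v : M →ₗ[A] k} (h : LinearMap.ker v ≤ LinearMap.ker u)
    (hu : u ≠ 0) : ∃ a : A, v = a • u := by
  obtain ⟨x, hx⟩ := DFunLike.ne_iff.1 hu
  have hvx : v x ≠ 0 := fun hvx => hx (h hvx)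
  obtain ⟨a, ha⟩ := hk (v x / u x)
  refine ⟨a, LinearMap.ext fun y => ?_⟩
  obtain ⟨c, hc⟩ := hk (v y / v x)
  have hy : u (y - c • x) = 0 := h (by
    rw [LinearMap.mem_ker, map_sub, map_smul, Algebra.smul_def, hc, div_mul_cancel₀ _ hvx,
      sub_self])
  rw [map_sub, map_smul, Algebra.smul_def, hc, sub_eq_zero] at hy
  rw [LinearMap.smul_apply, Algebra.smul_def, ha, hy]
  have hux : u x ≠ 0 := hx
  field_simp

variable [IsNoetherianRing A] [IsAlgClosed k]

theorem memIgt_of_forall_mem_fiberCone (hk : Function.Surjective (algebraMap A k))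
    (hI : RingHom.ker (algebraMap A k) ≤ I.radical) {b : I}
    (hb : ∀ u ∈ fiberCone I k, u b = 0) : MemIgt I b := by
  let F : I.Filtration A := I.stableFiltration I
  have hF : ∀ n, F.N n = I ^ (n + 1) := fun n => (pow_succ I n).symm
  obtain ⟨n, hn⟩ := mem_radical_of_forall_algHom hk (𝔞 := reesFiltrationIdeal F)
    (fun a ha => algebraMap_mem_radical_reesFiltrationIdeal (by simpa [hF] using hI ha))
    fun φ _ => hb _ ⟨φ, rfl⟩
  have hn' := Ideal.mul_mem_right (reesLinear I b) _ hn
  rw [← pow_succ, reesLinear_pow, reesMonomial_mem_reesFiltrationIdeal, hF] at hn'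
  exact memIgt_of_pow_mem n.succ_pos hn'

theorem isReduction_map_ker (hk : Function.Surjective (algebraMap A k))
    (hI : RingHom.ker (algebraMap A k) ≤ I.radical) (hIcl : ∀ x, IntegralOverIdeal I x → x ∈ I)
    {v : I →ₗ[A] k} (hv : v ∉ fiberCone I k) :
    IsReduction (Submodule.map I.subtype (LinearMap.ker v)) I := by
  let J : Ideal A := Submodule.map I.subtype (LinearMap.ker v)
  have hJI : J ≤ I := Submodule.map_subtype_le I _
  have hF0 : ∀ a, algebraMap A k a = 0 → a ∈ Ideal.radical ((reductionFiltration I J).N 0) := by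
    intro a ha
    obtain ⟨n, hn⟩ := hI ha
    have hmem : a • (⟨a ^ n, hn⟩ : I) ∈ LinearMap.ker v := by
      rw [LinearMap.mem_ker, map_smul, Algebra.smul_def, ha, zero_mul]
    refine ⟨n + 1, ?_⟩
    rw [pow_succ']
    have hJ : a * a ^ n ∈ J := Submodule.mem_map_of_mem hmem
    simpa [reductionFiltration] using hJ
  obtain ⟨s, hs⟩ := exists_forall_pow_le_of_reesLinear_mem_radical (reductionFiltration I J)
    fun b => mem_radical_of_forall_algHom hk
      (fun a ha => algebraMap_mem_radical_reesFiltrationIdeal (hF0 a ha)) fun φ hφ => by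
        by_contra hb
        have hker : LinearMap.ker v ≤ LinearMap.ker (φ.toLinearMap ∘ₗ reesLinear I) := fun x hx =>
          hφ _ ((reesMonomial_mem_reesFiltrationIdeal (n := 1) (by simp)).2 (by
            simpa only [reductionFiltration, Nat.sub_self, pow_zero, mul_one] using
              Submodule.mem_map_of_mem hx))
        obtain ⟨a, rfl⟩ := exists_eq_smul_of_ker_le hk hker fun h0 =>
          hb (LinearMap.congr_fun h0 b)
        exact hv (smul_mem_fiberCone a ⟨φ, rfl⟩)
  exact isReduction_of_pow_le (IsNoetherian.noetherian I) hIcl hJI (hs (s + 1) s.le_succ)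

end FiberCone

section Lines

variable {k V : Type*} [Field k] [AddCommGroup V] [Module k V] {Z : Set V}

theorem exists_submodule_coe_eq_of_sub_mem (hsmul : ∀ t : k, ∀ p ∈ Z, t • p ∈ Z)
    (hline : ∀ p q : V, ∀ t₀ : k, (∀ t ≠ t₀, t • p + q ∈ Z) → ∀ t : k, t • p + q ∈ Z)
    (ℓ : V →ₗ[k] k) (hsub : ∀ p ∈ Z, ∀ q ∈ Z, ℓ p ≠ ℓ q → p - q ∈ Z) {p₀ : V} (hp₀ : p₀ ∈ Z)
    (hℓ : ℓ p₀ ≠ 0) : ∃ W : Submodule k V, (W : Set V) = Z := by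
  have hneg : ∀ q ∈ Z, -q ∈ Z := fun q hq => neg_one_smul k q ▸ hsmul (-1) q hq
  have hadd_of_ne : ∀ p ∈ Z, ∀ q ∈ Z, ℓ p ≠ 0 → p + q ∈ Z := fun p hp q hq hℓp => by
    refine one_smul k p ▸ hline p q (-ℓ q / ℓ p) (fun t ht => ?_) 1
    have hne : ℓ (t • p) ≠ ℓ (-q) := by
      rwa [map_smul, map_neg, smul_eq_mul, ne_eq, ← eq_div_iff hℓp]
    exact sub_neg_eq_add (t • p) q ▸ hsub _ (hsmul t p hp) _ (hneg q hq) hne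
  have hadd : ∀ p ∈ Z, ∀ q ∈ Z, p + q ∈ Z := fun p hp q hq => by
    by_cases hℓp : ℓ p = 0
    · have htranslate : p₀ + p + q ∈ Z :=
        hadd_of_ne _ (hadd_of_ne _ hp₀ _ hp hℓ) _ hq (by rwa [map_add, hℓp, add_zero])
      rw [show p + q = -p₀ + (p₀ + p + q) by abel]
      exact hadd_of_ne _ (hneg _ hp₀) _ htranslate (by rwa [map_neg, neg_ne_zero])
    · exact hadd_of_ne _ hp _ hq hℓp
  exact ⟨{ carrier := Z
           zero_mem' := zero_smul k p₀ ▸ hsmul 0 p₀ hp₀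
           add_mem' := fun hp hq => hadd _ hp _ hq
           smul_mem' := fun t _ hp => hsmul t _ hp }, rfl⟩

end Lines

section Length

variable {A M ι : Type*} [CommRing A] [AddCommGroup M] [Module A M]

theorem length_quotient_eq_add {N P : Submodule A M} (h : N ≤ P) :
    Module.length A (M ⧸ N) =
      Module.length A (Submodule.map N.mkQ P) + Module.length A (M ⧸ P) := by
  rw [Module.length_eq_add_of_exact (Submodule.map N.mkQ P).subtype (Submodule.mkQ _)
    (Submodule.subtype_injective _) (Submodule.mkQ_surjective _)
    (by rw [LinearMap.exact_iff, Submodule.ker_mkQ, Submodule.range_subtype]),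
    (Submodule.quotientQuotientEquivQuotient N P h).length_eq]

variable {q : Ideal A}

theorem exists_eq_quotient_mk (x : ι → A ⧸ q) :
    ∃ c : ι → A, x = fun i => Submodule.Quotient.mk (c i) :=
  ⟨fun i => (x i).out, funext fun i => (Quotient.out_eq' (x i)).symm⟩

variable [Fintype ι]

/-- The linear map `(cᵢ) ↦ ∑ cᵢ vᵢ` from `(A ⧸ q)^ι` to a module, for a family `v` annihilated
by `q`. -/
noncomputable def quotientLinearCombination {v : ι → M}
    (hv : ∀ i, ∀ c ∈ q, c • v i = 0) : (ι → A ⧸ q) →ₗ[A] M :=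
  ∑ i, q.liftQ (LinearMap.toSpanSingleton A M (v i)) (hv i) ∘ₗ LinearMap.proj i

variable {v : ι → M}

theorem quotientLinearCombination_mk (hv : ∀ i, ∀ c ∈ q, c • v i = 0) (c : ι → A) :
    quotientLinearCombination hv (fun i => Submodule.Quotient.mk (c i)) = ∑ i, c i • v i :=
  LinearMap.sum_apply _ _ _

theorem range_quotientLinearCombination (hv : ∀ i, ∀ c ∈ q, c • v i = 0) :
    LinearMap.range (quotientLinearCombination hv) = Submodule.span A (Set.range v) := by
  ext y
  rw [Submodule.mem_span_range_iff_exists_fun]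
  refine ⟨?_, fun ⟨c, hc⟩ => ⟨_, (quotientLinearCombination_mk hv c).trans hc⟩⟩
  rintro ⟨x, rfl⟩
  obtain ⟨c, rfl⟩ := exists_eq_quotient_mk x
  exact ⟨c, (quotientLinearCombination_mk hv c).symm⟩

theorem length_span_range_le (hv : ∀ i, ∀ c ∈ q, c • v i = 0) :
    Module.length A (Submodule.span A (Set.range v)) ≤
      Fintype.card ι * Module.length A (A ⧸ q) := by
  rw [← range_quotientLinearCombination hv]
  exact (Module.length_le_of_surjective _ (LinearMap.surjective_rangeRestrict _)).trans_eq (by simp)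

theorem le_length_span_range (hv : ∀ i, ∀ c ∈ q, c • v i = 0)
    (hind : ∀ c : ι → A, ∑ i, c i • v i = 0 → ∀ i, c i ∈ q) :
    Fintype.card ι * Module.length A (A ⧸ q) ≤
      Module.length A (Submodule.span A (Set.range v)) := by
  have hinj : Function.Injective (quotientLinearCombination hv) := by
    rw [← LinearMap.ker_eq_bot, LinearMap.ker_eq_bot']
    intro x hx
    obtain ⟨c, rfl⟩ := exists_eq_quotient_mk x
    rw [quotientLinearCombination_mk] at hx
    exact funext fun i => (Submodule.Quotient.mk_eq_zero _).2 (hind c hx i)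
  rw [← range_quotientLinearCombination hv,
    ← (LinearEquiv.ofInjective (quotientLinearCombination hv) hinj).length_eq]
  simp

end Length

section Monomials

variable {A σ : Type*} [CommRing A] [Fintype σ] [DecidableEq σ]

/-- The values at `y` of the monomials of degree `e`. -/
def monomialValue (y : σ → A) {e : ℕ} (u : (Finset.univ : Finset σ).finsuppAntidiag e) : A :=
  ∏ i, y i ^ u.1 i

theorem card_finsuppAntidiag_univ (e : ℕ) :
    Fintype.card ((Finset.univ : Finset σ).finsuppAntidiag e) = (Fintype.card σ).multichoose e := by
  rw [Fintype.card_coe, Finset.card_finsuppAntidiag_nat_eq_multichoose, Finset.card_univ]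

theorem isHomogeneous_sum_monomial {e : ℕ}
    (c : (Finset.univ : Finset σ).finsuppAntidiag e → A) :
    (∑ u, MvPolynomial.monomial u.1 (c u)).IsHomogeneous e :=
  MvPolynomial.IsHomogeneous.sum _ _ _ fun u _ => MvPolynomial.isHomogeneous_monomial _ <| by
    rw [Finsupp.degree_eq_sum, (Finset.mem_finsuppAntidiag.1 u.2).1]

theorem eval_sum_monomial (y : σ → A) {e : ℕ}
    (c : (Finset.univ : Finset σ).finsuppAntidiag e → A) :
    MvPolynomial.eval y (∑ u, MvPolynomial.monomial u.1 (c u)) = ∑ u, c u * monomialValue y u := by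
  simp only [map_sum, MvPolynomial.eval_monomial, Finsupp.prod_pow, monomialValue]

theorem coeff_sum_monomial {e : ℕ} (c : (Finset.univ : Finset σ).finsuppAntidiag e → A)
    (u : (Finset.univ : Finset σ).finsuppAntidiag e) :
    (∑ w, MvPolynomial.monomial w.1 (c w)).coeff u.1 = c u := by
  simp only [MvPolynomial.coeff_sum, MvPolynomial.coeff_monomial, Subtype.coe_inj,
    Finset.sum_ite_eq', Finset.mem_univ, if_true]

theorem span_range_monomialValue (y : σ → A) (e : ℕ) :
    Ideal.span (Set.range (monomialValue y (e := e))) = Ideal.span (Set.range y) ^ e := by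
  ext z
  rw [Ideal.mem_span_range_iff_exists_fun, Ideal.mem_span_pow_iff_exists_isHomogeneous]
  constructor
  · rintro ⟨c, rfl⟩
    exact ⟨_, isHomogeneous_sum_monomial c, eval_sum_monomial y c⟩
  · rintro ⟨p, hp, rfl⟩
    rw [MvPolynomial.eval_eq', ← Ideal.mem_span_range_iff_exists_fun]
    refine sum_mem fun u hu => Ideal.mul_mem_left _ _ (Ideal.subset_span ⟨⟨u, ?_⟩, rfl⟩)
    rw [Finset.mem_finsuppAntidiag, ← Finsupp.degree_eq_sum]
    exact ⟨(hp.degree_eq_sum_deg_support hu).symm, Finset.subset_univ _⟩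

end Monomials

section AnalyticSpread

open IsLocalRing

variable {A σ : Type*} [CommRing A] [Fintype σ]

theorem length_map_mkQ_pow_le (y : σ → A) {q : Ideal A} (hq : Ideal.span (Set.range y) = q)
    (e : ℕ) : Module.length A (Submodule.map (q ^ (e + 1)).mkQ (q ^ e)) ≤
      (Fintype.card σ).multichoose e * Module.length A (A ⧸ q) := by
  classical
  have hpow : Ideal.span (Set.range (monomialValue y (e := e))) = q ^ e := by
    rw [span_range_monomialValue, hq]
  have hspan : Submodule.map (q ^ (e + 1)).mkQ (q ^ e) =
      Submodule.span A (Set.range ((q ^ (e + 1)).mkQ ∘ monomialValue y (e := e))) := by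
    rw [← hpow, Ideal.span, Submodule.map_span, Set.range_comp]
  rw [hspan, ← card_finsuppAntidiag_univ]
  refine length_span_range_le fun u c hc => ?_
  rw [Function.comp_apply, ← map_smul, Submodule.mkQ_apply, Submodule.Quotient.mk_eq_zero,
    pow_succ']
  exact Ideal.mul_mem_mul hc (hpow ▸ Ideal.subset_span (Set.mem_range_self u))

theorem length_quotient_pow_le (y : σ → A) {q : Ideal A} (hq : Ideal.span (Set.range y) = q)
    (e : ℕ) : Module.length A (A ⧸ q ^ e) ≤
      (∑ i ∈ Finset.range e, (Fintype.card σ).multichoose i : ℕ) * Module.length A (A ⧸ q) := by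
  induction e with
  | zero => simp [Ideal.one_eq_top]
  | succ e ih =>
    rw [length_quotient_eq_add (Ideal.pow_le_pow_right e.le_succ), Finset.sum_range_succ,
      Nat.cast_add, add_mul, add_comm]
    exact add_le_add ih (length_map_mkQ_pow_le y hq e)

variable {m I : Ideal A} [m.IsMaximal] {y : σ → A}

theorem multichoose_le_length_map_mkQ_pow (hy : ∀ i, y i ∈ I) {e : ℕ}
    (hind : ∀ f : MvPolynomial σ A, f.IsHomogeneous e → MvPolynomial.eval y f ∈ m * I ^ e →
      ∀ u, f.coeff u ∈ m) :
    (Fintype.card σ).multichoose e ≤ Module.length A (Submodule.map (m * I ^ e).mkQ (I ^ e)) := by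
  classical
  have hmem : ∀ u, monomialValue y (e := e) u ∈ I ^ e := fun u =>
    Ideal.pow_right_mono (Ideal.span_le.2 (Set.range_subset_iff.2 hy)) e
      (span_range_monomialValue y e ▸ Ideal.subset_span (Set.mem_range_self u))
  let v : (Finset.univ : Finset σ).finsuppAntidiag e → A ⧸ m * I ^ e :=
    fun u => (m * I ^ e).mkQ (monomialValue y u)
  have hv : ∀ u, ∀ c ∈ m, c • v u = 0 := fun u c hc => by
    rw [← map_smul, Submodule.mkQ_apply, Submodule.Quotient.mk_eq_zero]
    exact Ideal.mul_mem_mul hc (hmem u)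
  have hvind : ∀ c : _ → A, ∑ u, c u • v u = 0 → ∀ u, c u ∈ m := fun c hc u => by
    have hsum : ∑ u, c u • v u =
        (m * I ^ e).mkQ (MvPolynomial.eval y (∑ u, MvPolynomial.monomial u.1 (c u))) := by
      rw [eval_sum_monomial, map_sum]
      exact Finset.sum_congr rfl fun w _ => (map_smul _ (c w) (monomialValue y w)).symm
    rw [hsum, Submodule.mkQ_apply, Submodule.Quotient.mk_eq_zero] at hc
    exact coeff_sum_monomial c u ▸ hind _ (isHomogeneous_sum_monomial c) hc u
  have hspan : Submodule.span A (Set.range v) ≤ Submodule.map (m * I ^ e).mkQ (I ^ e) :=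
    Submodule.span_le.2 (Set.range_subset_iff.2 fun u => Submodule.mem_map_of_mem (hmem u))
  have hsimple : IsSimpleModule A (A ⧸ m) := isSimpleModule_iff_isCoatom.2 Ideal.IsMaximal.out
  calc ((Fintype.card σ).multichoose e : ℕ∞)
      = Fintype.card ((Finset.univ : Finset σ).finsuppAntidiag e) * Module.length A (A ⧸ m) := by
        rw [card_finsuppAntidiag_univ, Module.length_eq_one, mul_one]
    _ ≤ Module.length A (Submodule.span A (Set.range v)) := le_length_span_range hv hvind
    _ ≤ Module.length A (Submodule.map (m * I ^ e).mkQ (I ^ e)) :=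
        Module.length_le_of_injective _ (Submodule.inclusion_injective hspan)

theorem le_length_quotient_pow (hI : I ≤ m) (hy : ∀ i, y i ∈ I)
    (hind : ∀ e, ∀ f : MvPolynomial σ A, f.IsHomogeneous e →
      MvPolynomial.eval y f ∈ m * I ^ e → ∀ u, f.coeff u ∈ m) (e : ℕ) :
    (∑ i ∈ Finset.range e, (Fintype.card σ).multichoose i : ℕ) ≤ Module.length A (A ⧸ I ^ e) := by
  induction e with
  | zero => simp
  | succ e ih =>
    have hle : I ^ (e + 1) ≤ m * I ^ e := by
      rw [pow_succ']
      exact Ideal.mul_mono_left hI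
    refine le_trans ?_ (Module.length_le_of_surjective _ (Submodule.factor_surjective hle))
    rw [length_quotient_eq_add Ideal.mul_le_right, Finset.sum_range_succ, Nat.cast_add, add_comm]
    exact add_le_add (multichoose_le_length_map_mkQ_pow hy (hind e)) ih

theorem exists_finset_span_le_of_radical_eq [IsNoetherianRing A] {p : Ideal A} [p.IsPrime]
    (hI : I.radical = p) :
    ∃ s : Finset A, s.card = p.height ∧ Ideal.span s ≤ I ∧
      p ∈ (Ideal.span (s : Set A)).minimalPrimes := by
  have hIp : I ≤ p := hI ▸ Ideal.le_radical
  have hheight : I.height = p.height := by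
    rw [I.height_eq_inf_minimalPrimes, p.height_eq_inf_minimalPrimes, ← hI,
      Ideal.radical_minimalPrimes]
  obtain ⟨J, hJI, hrank, hJ⟩ :=
    I.exists_spanRank_eq_and_height_eq (ne_top_of_le_ne_top (Ideal.IsPrime.ne_top ‹_›) hIp)
  have hfg : Submodule.FG J := IsNoetherian.noetherian J
  obtain ⟨s, hs, rfl⟩ := hfg.exists_span_finset_card_eq_spanFinrank
  refine ⟨s, ?_, hJI, Ideal.mem_minimalPrimes_of_height_le (hJI.trans hIp) (hJ.trans hheight).ge⟩
  rw [hfg.spanRank_eq_spanFinrank, hheight, ← hs] at hrank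
  exact_mod_cast hrank

-- If the `a i` were analytically independent, the length of `A ⧸ I ^ n` would grow at least like
-- `n ^ (d + 1)`, but a parameter ideal contained in `I` bounds it by a multiple of `n ^ d`.
theorem exists_isHomogeneous_eval_mem [IsNoetherianRing A] [IsLocalRing A] {d : ℕ}
    (hd : ringKrullDim A = d) (hI : I.radical = maximalIdeal A)
    {a : Fin (d + 1) → A} (ha : ∀ i, a i ∈ I) :
    ∃ e, ∃ f : MvPolynomial (Fin (d + 1)) A, f.IsHomogeneous e ∧
      MvPolynomial.eval a f ∈ maximalIdeal A * I ^ e ∧ ∃ u, f.coeff u ∉ maximalIdeal A := by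
  by_contra! hind
  obtain ⟨s, hs, hsI, hmin⟩ := exists_finset_span_le_of_radical_eq hI
  have hcard : Fintype.card s = d := by
    have hheight : ((s.card : ℕ∞) : WithBot ℕ∞) = d := by
      rw [hs, maximalIdeal_height_eq_ringKrullDim, hd]
    rw [Fintype.card_coe]
    exact_mod_cast hheight
  obtain ⟨c, hc⟩ : ∃ c : ℕ, c = Module.length A (A ⧸ Ideal.span (s : Set A)) := by
    have hart := quotient_artinian_of_mem_minimalPrimes_of_isLocalRing _ hmin
    rw [← ENat.ne_top_iff_exists, Module.length_eq_of_surjective (R := A ⧸ Ideal.span (s : Set A))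
      Ideal.Quotient.mk_surjective]
    exact Module.length_ne_top
  have hbound : ∀ n, (n + d + 1).choose (d + 1) ≤ (n + d).choose d * c := fun n => by
    have hlength := calc
      ((∑ i ∈ Finset.range (n + 1), (d + 1).multichoose i : ℕ) : ℕ∞)
        ≤ Module.length A (A ⧸ I ^ (n + 1)) := by
          simpa using le_length_quotient_pow (hI ▸ Ideal.le_radical) ha hind (n + 1)
      _ ≤ Module.length A (A ⧸ Ideal.span (s : Set A) ^ (n + 1)) :=
          Module.length_le_of_surjective _
            (Submodule.factor_surjective (Ideal.pow_right_mono hsI (n + 1)))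
      _ ≤ (∑ i ∈ Finset.range (n + 1), d.multichoose i : ℕ) * c := by
          simpa [hcard, hc] using length_quotient_pow_le (fun x : s => (x : A)) (by simp) (n + 1)
    rw [Nat.sum_range_multichoose, Nat.sum_range_multichoose] at hlength
    exact_mod_cast hlength
  have hstep := Nat.add_one_mul_choose_eq (c * (d + 1) + d) d
  have hpos : 0 < (c * (d + 1) + d).choose d := Nat.choose_pos (by omega)
  nlinarith [hbound (c * (d + 1))]

end AnalyticSpread

section Separation

open IsLocalRing

variable {A k σ : Type*} [CommRing A] {I : Ideal A}

theorem algHom_reesMonomial_eq_zero [CommRing k] [Algebra A k] (φ : reesAlgebra I →ₐ[A] k) {e : ℕ}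
    {y : A} (hy : y ∈ I ^ e) (hy' : y ∈ RingHom.ker (algebraMap A k) * I ^ e) :
    φ (reesMonomial hy) = 0 := by
  suffices ∃ h : y ∈ I ^ e, φ (reesMonomial h) = 0 from this.2
  clear hy
  refine Submodule.mul_induction_on hy' (fun a ha z hz => ?_) fun z w hz hw => ?_
  · refine ⟨Ideal.mul_mem_left _ a hz, ?_⟩
    have hsmul : reesMonomial (Ideal.mul_mem_left _ a hz) = a • reesMonomial hz :=
      Subtype.ext (by simp [smul_monomial])
    rw [hsmul, map_smul, Algebra.smul_def, RingHom.mem_ker.1 ha, zero_mul]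
  · obtain ⟨hz, hz'⟩ := hz
    obtain ⟨hw, hw'⟩ := hw
    refine ⟨add_mem hz hw, ?_⟩
    have hadd : reesMonomial (add_mem hz hw) = reesMonomial hz + reesMonomial hw :=
      Subtype.ext (by simp)
    rw [hadd, map_add, hz', hw', add_zero]

theorem aeval_reesLinear {f : MvPolynomial σ A} {e : ℕ} (hf : f.IsHomogeneous e) (y : σ → I) :
    (MvPolynomial.aeval (fun i => reesLinear I (y i)) f : A[X]) =
      monomial e (MvPolynomial.eval (fun i => (y i : A)) f) := by
  rw [MvPolynomial.aeval_def, MvPolynomial.eval₂_eq, MvPolynomial.eval_eq, map_sum]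
  push_cast
  refine Finset.sum_congr rfl fun u hu => ?_
  have hdeg : ∑ i ∈ u.support, u i = e := by
    simpa [Finsupp.weight_apply, Finsupp.sum] using hf (MvPolynomial.mem_support_iff.1 hu)
  simp only [coe_reesLinear, ← C_mul_X_pow_eq_monomial, pow_one, mul_pow, Finset.prod_mul_distrib,
    Finset.prod_pow_eq_pow_sum, hdeg, map_mul, map_prod, map_pow, mul_assoc]
  rfl

theorem eval_map_eq_zero_of_mem_fiberCone [CommRing k] [Algebra A k] {u : I →ₗ[A] k}
    (hu : u ∈ fiberCone I k) {f : MvPolynomial σ A} {e : ℕ} (hf : f.IsHomogeneous e) (y : σ → I)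
    (hfy : MvPolynomial.eval (fun i => (y i : A)) f ∈ RingHom.ker (algebraMap A k) * I ^ e) :
    MvPolynomial.eval (fun i => u (y i)) (MvPolynomial.map (algebraMap A k) f) = 0 := by
  obtain ⟨φ, rfl⟩ := hu
  have hfy' : MvPolynomial.eval (fun i => (y i : A)) f ∈ I ^ e := Ideal.mul_le_right hfy
  have hf' : MvPolynomial.aeval (fun i => reesLinear I (y i)) f = reesMonomial hfy' :=
    Subtype.ext (aeval_reesLinear hf y)
  calc MvPolynomial.eval (fun i => φ (reesLinear I (y i))) (MvPolynomial.map (algebraMap A k) f)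
      = φ (MvPolynomial.aeval (fun i => reesLinear I (y i)) f) := by
        rw [MvPolynomial.eval_map, ← MvPolynomial.aeval_def]
        exact (MvPolynomial.comp_aeval_apply _ φ f).symm
    _ = 0 := by rw [hf', algHom_reesMonomial_eq_zero φ hfy' hfy]

variable [IsNoetherianRing A]

theorem exists_forall_apply_eq [Field k] [IsAlgClosed k] [Algebra A k] [Fintype σ]
    (hk : Function.Surjective (algebraMap A k))
    (hI : RingHom.ker (algebraMap A k) ≤ I.radical) {W : Submodule k (I →ₗ[A] k)}
    (hW : (W : Set (I →ₗ[A] k)) = fiberCone I k) {y : σ → I}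
    (hind : ∀ c : σ → A, MemIgt I (∑ i, c i * y i) → ∀ i, algebraMap A k (c i) = 0) (v : σ → k) :
    ∃ u ∈ fiberCone I k, ∀ i, u (y i) = v i := by
  classical
  let Λ : (I →ₗ[A] k) →ₗ[k] σ → k := LinearMap.pi fun i => LinearMap.applyₗ' k (y i)
  suffices hΛ : W.map Λ = ⊤ by
    obtain ⟨u, hu, rfl⟩ := (hΛ ▸ Submodule.mem_top : v ∈ W.map Λ)
    exact ⟨u, hW ▸ hu, fun i => rfl⟩
  by_contra hne
  obtain ⟨ℓ, hℓ, hle⟩ := Submodule.exists_le_ker_of_lt_top _ (lt_top_iff_ne_top.2 hne)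
  choose c hc using fun i : σ => hk (ℓ (Pi.single i 1))
  have hℓ_apply : ∀ v, ℓ v = ∑ i, v i * algebraMap A k (c i) := fun v => by
    conv_lhs => rw [← Finset.univ_sum_single v, map_sum]
    refine Finset.sum_congr rfl fun i _ => ?_
    rw [hc, ← smul_eq_mul, ← map_smul, ← Pi.single_smul', smul_eq_mul, mul_one]
  have hvanish : ∀ u ∈ fiberCone I k, u (∑ i, c i • y i) = 0 := fun u hu => by
    have hu' : ℓ (Λ u) = 0 := hle (Submodule.mem_map_of_mem (hW ▸ hu : u ∈ (W : Set _)))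
    simpa [hℓ_apply, Λ, Algebra.smul_def, mul_comm] using hu'
  have hzero : ∀ i, algebraMap A k (c i) = 0 :=
    hind c (by simpa using memIgt_of_forall_mem_fiberCone hk hI hvanish)
  exact hℓ (LinearMap.ext fun v => by simp [hℓ_apply, hzero])

theorem coe_ne_fiberCone_residueField [IsLocalRing A] [IsAlgClosed (ResidueField A)] {d : ℕ}
    (hd : ringKrullDim A = d) (hI : I.radical = maximalIdeal A) {y : Fin (d + 1) → I}
    (hind : ∀ c : Fin (d + 1) → A, MemIgt I (∑ i, c i * y i) → ∀ i, c i ∈ maximalIdeal A)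
    (W : Submodule (ResidueField A) (I →ₗ[A] ResidueField A)) :
    (W : Set (I →ₗ[A] ResidueField A)) ≠ fiberCone I (ResidueField A) := fun hW => by
  have hker : RingHom.ker (algebraMap A (ResidueField A)) = maximalIdeal A := ker_residue
  have : Infinite (ResidueField A) := IsAlgClosed.instInfinite
  obtain ⟨e, f, hf, hfy, u, hu⟩ := exists_isHomogeneous_eval_mem hd hI fun i => (y i).2
  have hmap : MvPolynomial.map (algebraMap A (ResidueField A)) f = 0 :=
    MvPolynomial.funext fun v => by
      obtain ⟨w, hw, hwv⟩ := exists_forall_apply_eq residue_surjective (hker.trans hI.symm).le hW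
        (fun c hc i => (residue_eq_zero_iff (c i)).2 (hind c hc i)) v
      simpa only [hwv, map_zero] using eval_map_eq_zero_of_mem_fiberCone hw hf y (hker.symm ▸ hfy)
  refine hu ((residue_eq_zero_iff _).1 ?_)
  have hcoeff := congrArg (MvPolynomial.coeff u) hmap
  rwa [MvPolynomial.coeff_map, MvPolynomial.coeff_zero] at hcoeff

end Separation

theorem exists_submodule_coe_eq_fiberCone {A k : Type*} [CommRing A] [IsNoetherianRing A] [Field k]
    [IsAlgClosed k] [CharZero k] [Algebra A k] (hk : Function.Surjective (algebraMap A k))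
    {I : Ideal A} (hI : RingHom.ker (algebraMap A k) ≤ I.radical)
    (hIcl : ∀ x, IntegralOverIdeal I x → x ∈ I) {b : I}
    (hb : ∀ J, IsReduction J I → WSubIdeal J (b : A)) {u₀ : I →ₗ[A] k} (hu₀ : u₀ ∈ fiberCone I k)
    (hu₀b : u₀ b ≠ 0) : ∃ W : Submodule k (I →ₗ[A] k), (W : Set (I →ₗ[A] k)) = fiberCone I k := by
  refine exists_submodule_coe_eq_of_sub_mem (fun t u hu => ?_)
    (fun u v t₀ => smul_add_mem_fiberCone (Set.finite_singleton t₀).infinite_compl)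
    (LinearMap.applyₗ' k b) (fun u hu v hv huv => ?_) hu₀ hu₀b
  · obtain ⟨a, rfl⟩ := hk t
    simpa only [algebraMap_smul] using smul_mem_fiberCone a hu
  · contrapose! huv
    refine WSubIdeal.apply_eq_of_mem_fiberCone hu hv (Submodule.map_subtype_le I _) ?_
      (hb _ (isReduction_map_ker hk hI hIcl huv))
    rintro x ⟨y, hy, hyx⟩
    obtain rfl : y = x := Subtype.ext hyx
    exact sub_eq_zero.1 hy

/-- Corollary 4.15(2): let `(A,m,k)` be a Noetherian local ring of Krull
dimension `d` with `k` algebraically closed of characteristic 0, and let `I` be an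
`m`-primary integrally closed ideal.  If `dim_k(I/I_>) > d` (expressed by the existence of
`d+1` elements of `I` whose images in `I/I_>` are `k`-linearly independent), then the
intersection of `*J` over all minimal reductions `J` of `I` equals `I_>`. -/
theorem iInter_weakSubintegralClosure_eq_igt {A : Type*} [CommRing A] [IsNoetherianRing A]
    [IsLocalRing A]
    [IsAlgClosed (IsLocalRing.ResidueField A)] [CharZero (IsLocalRing.ResidueField A)]
    (d : ℕ) (hd : ringKrullDim A = d)
    (I : Ideal A) (hIm : I.radical = IsLocalRing.maximalIdeal A)
    (hIcl : ∀ x : A, IntegralOverIdeal I x → x ∈ I)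
    (a : Fin (d + 1) → A) (ha : ∀ i, a i ∈ I)
    (hind : ∀ c : Fin (d + 1) → A, MemIgt I (∑ i, c i * a i) →
      ∀ i, c i ∈ IsLocalRing.maximalIdeal A) :
    (⋂ J ∈ {J : Ideal A | IsMinimalReduction J I}, {x : A | WSubIdeal J x})
      = {x : A | MemIgt I x} := by
  refine Set.Subset.antisymm (fun b hb => ?_) fun b hb =>
    Set.mem_iInter₂.2 fun J hJ => MemIgt.wSubIdeal hJ.1 hb
  have hb' : ∀ J, IsReduction J I → WSubIdeal J b := fun J hJ => by
    obtain ⟨J', hJ'J, hJ'⟩ := hJ.exists_isMinimalReduction_le hIcl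
    exact (Set.mem_iInter₂.1 hb J' hJ').mono hJ'J
  have hbI : b ∈ I := hIcl b (hb' I ⟨le_rfl, fun _ => Iff.rfl⟩).integralOverIdeal
  have hker : RingHom.ker (algebraMap A (IsLocalRing.ResidueField A)) ≤ I.radical :=
    (IsLocalRing.ker_residue.trans hIm.symm).le
  refine memIgt_of_forall_mem_fiberCone (b := ⟨b, hbI⟩) IsLocalRing.residue_surjective hker
    fun u₀ hu₀ => by_contra fun hu₀b => ?_
  obtain ⟨W, hW⟩ := exists_submodule_coe_eq_fiberCone IsLocalRing.residue_surjective hker hIcl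
    hb' hu₀ hu₀b
  exact coe_ne_fiberCone_residueField (y := fun i => ⟨a i, ha i⟩) hd hIm hind W hW
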